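/- Let A be a set with a length function μ and for t ∈ ℝ let ψ_t : F_ℝ(A) → F_ℝ(A) be the homomorphism determined by ψ_t(a(r)) = a(tr). Then: (a) for every w ∈ F_ℝ(A) and every t ∈ ℝ, ‖ψ_t(w)‖_{F_ℝ(A;μ)} = |t|·‖w‖_{F_ℝ(A;μ)}; (b) for every w ∈ F_ℝ(A) there exists a constant C_w ≥ 0 such that ‖ψ_s(w)⁻¹ψ_t(w)‖_{F_ℝ(A;μ)} ≤ C_w·|s−t| for all s,t ∈ ℝ. -/

import Mathlib

/-!
The endomorphism `ψ_t` carries a product of conjugates of generators `a(r)^{±1}` to a product of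
conjugates of the generators `a(tr)^{±1}`, so it multiplies total lengths by `|t|`; hence
`‖ψ_t(w)‖ ≤ |t|‖w‖`. For `t ≠ 0` the reverse inequality follows by applying this to `ψ_{t⁻¹}`, the
inverse of `ψ_t`; for `t = 0` it is nonnegativity of the norm.

A conjugation-invariant norm satisfies `‖(gh)⁻¹g'h'‖ ≤ ‖g⁻¹g'‖ + ‖h⁻¹h'‖`, so the Lipschitz
constants of two curves in the group add up in their product. The curve `t ↦ ψ_t(a(r)) = a(tr)` has
Lipschitz constant `|r|μ(a)`, and every `t ↦ ψ_t(w)` is a product of such curves.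
-/

/-- The set of total lengths of expressions of `g` as a product of conjugates
of generators `gen i ^ {±1}`, each weighted by the length function `ℓ`. -/
def wordNormSet {G : Type*} [Group G] {I : Type*}
    (gen : I → G) (ℓ : I → ℝ) (g : G) : Set ℝ :=
  { x | ∃ l : List (G × I × Bool),
      g = (l.map fun p => p.1 * (if p.2.2 then gen p.2.1 else (gen p.2.1)⁻¹) * p.1⁻¹).prod ∧
      x = (l.map fun p => ℓ p.2.1).sum }

/-- The conjugation-invariant word norm associated to a length function. -/
noncomputable def wordNorm {G : Type*} [Group G] {I : Type*}
    (gen : I → G) (ℓ : I → ℝ) (g : G) : ℝ :=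
  sInf (wordNormSet gen ℓ g)

/-- `F_ℝ(A)`: the free product of copies of `ℝ` indexed by `A`. -/
abbrev FR (A : Type*) : Type _ := Monoid.CoprodI (fun _ : A => Multiplicative ℝ)

/-- The generator `a(r)` of `F_ℝ(A)`. -/
def genFR (A : Type*) (p : A × ℝ) : FR A :=
  Monoid.CoprodI.of (i := p.1) (Multiplicative.ofAdd p.2)

/-- The conjugation-invariant word norm `‖·‖_{F_ℝ(A;μ)}`. -/
noncomputable def FRnorm {A : Type*} (μ : A → ℝ) : FR A → ℝ :=
  wordNorm (genFR A) (fun p => |p.2| * μ p.1)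

/-- Multiplication by `t` as an endomorphism of the group `Multiplicative ℝ`. -/
def scaleHom (t : ℝ) : Multiplicative ℝ →* Multiplicative ℝ where
  toFun x := Multiplicative.ofAdd (t * Multiplicative.toAdd x)
  map_one' := by simp
  map_mul' x y := by
    simp [toAdd_mul, mul_add, ofAdd_add]

/-- The endomorphism `ψ_t` of `F_ℝ(A)` determined by `ψ_t(a(r)) = a(tr)`. -/
noncomputable def psiT {A : Type*} (t : ℝ) : FR A →* FR A :=
  Monoid.CoprodI.lift (fun a =>
    (Monoid.CoprodI.of (M := fun _ : A => Multiplicative ℝ) (i := a)).comp (scaleHom t))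

section WordNorm

open scoped Pointwise

variable {G : Type*} [Group G] {I : Type*} {gen : I → G} {ℓ : I → ℝ}

lemma zero_mem_wordNormSet_one : (0 : ℝ) ∈ wordNormSet gen ℓ 1 :=
  ⟨[], by simp, by simp⟩

lemma length_mem_wordNormSet_gen (i : I) : ℓ i ∈ wordNormSet gen ℓ (gen i) :=
  ⟨[(1, i, true)], by simp, by simp⟩

lemma wordNormSet_add_subset (g h : G) :
    wordNormSet gen ℓ g + wordNormSet gen ℓ h ⊆ wordNormSet gen ℓ (g * h) := by
  rintro _ ⟨_, ⟨l, rfl, rfl⟩, _, ⟨m, rfl, rfl⟩, rfl⟩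
  exact ⟨l ++ m, by simp, by simp⟩

lemma wordNormSet_subset_conj (k g : G) :
    wordNormSet gen ℓ g ⊆ wordNormSet gen ℓ (k * g * k⁻¹) := by
  rintro _ ⟨l, rfl, rfl⟩
  refine ⟨l.map fun p => (k * p.1, p.2), ?_, by simp [Function.comp_def]⟩
  rw [← MulAut.conj_apply, map_list_prod]
  simp [Function.comp_def, mul_assoc]

lemma wordNormSet_conj (k g : G) :
    wordNormSet gen ℓ (k * g * k⁻¹) = wordNormSet gen ℓ g := by
  refine Set.Subset.antisymm ?_ (wordNormSet_subset_conj k g)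
  simpa [mul_assoc] using wordNormSet_subset_conj (gen := gen) (ℓ := ℓ) k⁻¹ (k * g * k⁻¹)

lemma wordNorm_conj (k g : G) : wordNorm gen ℓ (k * g * k⁻¹) = wordNorm gen ℓ g := by
  rw [wordNorm, wordNormSet_conj, wordNorm]

lemma nonneg_of_mem_wordNormSet (hℓ : ∀ i, 0 ≤ ℓ i) {g : G} {x : ℝ}
    (hx : x ∈ wordNormSet gen ℓ g) : 0 ≤ x := by
  obtain ⟨l, -, rfl⟩ := hx
  exact List.sum_nonneg (List.forall_mem_map.2 fun p _ => hℓ p.2.1)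

lemma bddBelow_wordNormSet (hℓ : ∀ i, 0 ≤ ℓ i) (g : G) : BddBelow (wordNormSet gen ℓ g) :=
  ⟨0, fun _ hx => nonneg_of_mem_wordNormSet hℓ hx⟩

lemma wordNorm_nonneg (hℓ : ∀ i, 0 ≤ ℓ i) (g : G) : 0 ≤ wordNorm gen ℓ g :=
  Real.sInf_nonneg fun _ hx => nonneg_of_mem_wordNormSet hℓ hx

lemma wordNorm_le_of_mem (hℓ : ∀ i, 0 ≤ ℓ i) {g : G} {x : ℝ} (hx : x ∈ wordNormSet gen ℓ g) :
    wordNorm gen ℓ g ≤ x :=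
  csInf_le (bddBelow_wordNormSet hℓ g) hx

lemma wordNorm_one (hℓ : ∀ i, 0 ≤ ℓ i) : wordNorm gen ℓ 1 = 0 :=
  le_antisymm (wordNorm_le_of_mem hℓ zero_mem_wordNormSet_one) (wordNorm_nonneg hℓ 1)

lemma wordNorm_gen_le (hℓ : ∀ i, 0 ≤ ℓ i) (i : I) : wordNorm gen ℓ (gen i) ≤ ℓ i :=
  wordNorm_le_of_mem hℓ (length_mem_wordNormSet_gen i)

lemma wordNorm_mul_le (hℓ : ∀ i, 0 ≤ ℓ i) {g h : G} (hg : (wordNormSet gen ℓ g).Nonempty)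
    (hh : (wordNormSet gen ℓ h).Nonempty) :
    wordNorm gen ℓ (g * h) ≤ wordNorm gen ℓ g + wordNorm gen ℓ h :=
  calc wordNorm gen ℓ (g * h)
      ≤ sInf (wordNormSet gen ℓ g + wordNormSet gen ℓ h) :=
        csInf_le_csInf (bddBelow_wordNormSet hℓ _) (hg.add hh) (wordNormSet_add_subset g h)
    _ = wordNorm gen ℓ g + wordNorm gen ℓ h :=
        csInf_add hg (bddBelow_wordNormSet hℓ g) hh (bddBelow_wordNormSet hℓ h)

lemma wordNorm_inv_mul_mul_le (hℓ : ∀ i, 0 ≤ ℓ i) {g g' h h' : G}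
    (hg : (wordNormSet gen ℓ (g⁻¹ * g')).Nonempty)
    (hh : (wordNormSet gen ℓ (h⁻¹ * h')).Nonempty) :
    wordNorm gen ℓ ((g * h)⁻¹ * (g' * h')) ≤
      wordNorm gen ℓ (g⁻¹ * g') + wordNorm gen ℓ (h⁻¹ * h') := by
  have hsplit : (g * h)⁻¹ * (g' * h') = h⁻¹ * (g⁻¹ * g') * h⁻¹⁻¹ * (h⁻¹ * h') := by group
  rw [hsplit, ← wordNorm_conj h⁻¹ (g⁻¹ * g')]
  exact wordNorm_mul_le hℓ (by rwa [wordNormSet_conj]) hh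

section Map

variable {H : Type*} [Group H] {J : Type*} {gen' : J → H} {ℓ' : J → ℝ}

lemma exists_le_mem_wordNormSet_map (f : G →* H) {φ : I → J} {c : ℝ}
    (hgen : ∀ i, f (gen i) = gen' (φ i)) (hlen : ∀ i, ℓ' (φ i) ≤ c * ℓ i) {g : G} {x : ℝ}
    (hx : x ∈ wordNormSet gen ℓ g) : ∃ y ∈ wordNormSet gen' ℓ' (f g), y ≤ c * x := by
  obtain ⟨l, rfl, rfl⟩ := hx
  refine ⟨_, ⟨l.map fun p => (f p.1, φ p.2.1, p.2.2), ?_, rfl⟩, ?_⟩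
  · simp [map_list_prod, Function.comp_def, apply_ite f, hgen]
  · rw [List.map_map, ← List.sum_map_mul_left]
    exact List.sum_le_sum fun p _ => hlen p.2.1

lemma wordNorm_map_le (hℓ' : ∀ j, 0 ≤ ℓ' j) (f : G →* H) {φ : I → J} {c : ℝ} (hc : 0 ≤ c)
    (hgen : ∀ i, f (gen i) = gen' (φ i)) (hlen : ∀ i, ℓ' (φ i) ≤ c * ℓ i) {g : G}
    (hg : (wordNormSet gen ℓ g).Nonempty) :
    wordNorm gen' ℓ' (f g) ≤ c * wordNorm gen ℓ g := by
  rw [wordNorm.eq_def gen, ← smul_eq_mul, ← Real.sInf_smul_of_nonneg hc]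
  refine le_csInf hg.smul_set ?_
  rintro _ ⟨x, hx, rfl⟩
  obtain ⟨y, hy, hyx⟩ := exists_le_mem_wordNormSet_map f hgen hlen hx
  exact (wordNorm_le_of_mem hℓ' hy).trans hyx

end Map

end WordNorm

section FreeProduct

open scoped Pointwise

variable {A : Type*} {μ : A → ℝ}

@[elab_as_elim]
lemma genFR_induction {motive : FR A → Prop} (w : FR A) (one : motive 1)
    (genFR : ∀ p, motive (genFR A p)) (mul : ∀ x y, motive x → motive y → motive (x * y)) :
    motive w :=
  Monoid.CoprodI.induction_on w one (fun a r => genFR (a, r.toAdd)) mul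

lemma genFR_inv_mul_genFR (a : A) (r s : ℝ) :
    (genFR A (a, r))⁻¹ * genFR A (a, s) = genFR A (a, s - r) := by
  simp only [genFR]
  rw [← map_inv, ← map_mul, ← ofAdd_neg, ← ofAdd_add, neg_add_eq_sub]

lemma psiT_genFR (t : ℝ) (p : A × ℝ) : psiT t (genFR A p) = genFR A (p.1, t * p.2) := by
  simp [psiT, genFR, scaleHom]

lemma psiT_one (w : FR A) : psiT 1 w = w := by
  induction w using genFR_induction with
  | one => exact map_one _
  | genFR p => simp [psiT_genFR]
  | mul x y hx hy => rw [map_mul, hx, hy]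

lemma psiT_psiT (s t : ℝ) (w : FR A) : psiT s (psiT t w) = psiT (s * t) w := by
  induction w using genFR_induction with
  | one => simp
  | genFR p => simp [psiT_genFR, mul_assoc]
  | mul x y hx hy => simp only [map_mul, hx, hy]

lemma wordNormSet_genFR_nonempty (ℓ : A × ℝ → ℝ) (w : FR A) :
    (wordNormSet (genFR A) ℓ w).Nonempty := by
  induction w using genFR_induction with
  | one => exact ⟨0, zero_mem_wordNormSet_one⟩
  | genFR p => exact ⟨ℓ p, length_mem_wordNormSet_gen p⟩
  | mul x y hx hy => exact (hx.add hy).mono (wordNormSet_add_subset x y)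

lemma abs_mul_length_nonneg (hμ : ∀ a, 0 ≤ μ a) (p : A × ℝ) : 0 ≤ |p.2| * μ p.1 :=
  mul_nonneg (abs_nonneg _) (hμ _)

lemma FRnorm_nonneg (hμ : ∀ a, 0 ≤ μ a) (w : FR A) : 0 ≤ FRnorm μ w :=
  wordNorm_nonneg (abs_mul_length_nonneg hμ) w

lemma FRnorm_one (hμ : ∀ a, 0 ≤ μ a) : FRnorm μ 1 = 0 :=
  wordNorm_one (abs_mul_length_nonneg hμ)

lemma FRnorm_psiT_le (hμ : ∀ a, 0 ≤ μ a) (t : ℝ) (w : FR A) :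
    FRnorm μ (psiT t w) ≤ |t| * FRnorm μ w :=
  wordNorm_map_le (abs_mul_length_nonneg hμ) (psiT t) (abs_nonneg t) (psiT_genFR t)
    (fun p => by rw [abs_mul, mul_assoc]) (wordNormSet_genFR_nonempty _ w)

lemma FRnorm_psiT (hμ : ∀ a, 0 ≤ μ a) (t : ℝ) (w : FR A) :
    FRnorm μ (psiT t w) = |t| * FRnorm μ w := by
  refine le_antisymm (FRnorm_psiT_le hμ t w) ?_
  rcases eq_or_ne t 0 with rfl | ht
  · simpa using FRnorm_nonneg hμ (psiT 0 w)
  · calc |t| * FRnorm μ w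
        = |t| * FRnorm μ (psiT t⁻¹ (psiT t w)) := by
          rw [psiT_psiT, inv_mul_cancel₀ ht, psiT_one]
      _ ≤ |t| * (|t⁻¹| * FRnorm μ (psiT t w)) := by gcongr; exact FRnorm_psiT_le hμ _ _
      _ = FRnorm μ (psiT t w) := by rw [abs_inv, mul_inv_cancel_left₀ (abs_ne_zero.2 ht)]

lemma FRnorm_psiT_inv_mul_psiT_genFR_le (hμ : ∀ a, 0 ≤ μ a) (s t : ℝ) (p : A × ℝ) :
    FRnorm μ ((psiT s (genFR A p))⁻¹ * psiT t (genFR A p)) ≤ |p.2| * μ p.1 * |s - t| := by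
  rw [psiT_genFR, psiT_genFR, genFR_inv_mul_genFR, ← sub_mul]
  calc FRnorm μ (genFR A (p.1, (t - s) * p.2))
      ≤ |(t - s) * p.2| * μ p.1 := wordNorm_gen_le (abs_mul_length_nonneg hμ) _
    _ = |p.2| * μ p.1 * |s - t| := by rw [abs_mul, abs_sub_comm]; ring

lemma exists_FRnorm_psiT_inv_mul_psiT_le (hμ : ∀ a, 0 ≤ μ a) (w : FR A) :
    ∃ C : ℝ, 0 ≤ C ∧ ∀ s t : ℝ, FRnorm μ ((psiT s w)⁻¹ * psiT t w) ≤ C * |s - t| := by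
  induction w using genFR_induction with
  | one => exact ⟨0, le_rfl, fun s t => by simp [FRnorm_one hμ]⟩
  | genFR p =>
    exact ⟨|p.2| * μ p.1, abs_mul_length_nonneg hμ p,
      fun s t => FRnorm_psiT_inv_mul_psiT_genFR_le hμ s t p⟩
  | mul x y hx hy =>
    obtain ⟨C, hC, hx⟩ := hx
    obtain ⟨D, hD, hy⟩ := hy
    refine ⟨C + D, add_nonneg hC hD, fun s t => ?_⟩
    rw [map_mul, map_mul, add_mul]
    exact (wordNorm_inv_mul_mul_le (abs_mul_length_nonneg hμ) (wordNormSet_genFR_nonempty _ _)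
      (wordNormSet_genFR_nonempty _ _)).trans (add_le_add (hx s t) (hy s t))

end FreeProduct

/-- (a) `‖ψ_t(w)‖ = |t|·‖w‖` for all `w ∈ F_ℝ(A)` and `t ∈ ℝ`;
(b) for every `w` there is `C_w ≥ 0` with `‖ψ_s(w)⁻¹ ψ_t(w)‖ ≤ C_w·|s−t|` for all `s,t`. -/
theorem psiT_norm_properties
    {A : Type*} (μ : A → ℝ) (hμ : ∀ a, 0 ≤ μ a) :
    (∀ (w : FR A) (t : ℝ),
        FRnorm μ (psiT t w) = |t| * FRnorm μ w) ∧
    (∀ w : FR A, ∃ C : ℝ, 0 ≤ C ∧ ∀ s t : ℝ,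
        FRnorm μ ((psiT s w)⁻¹ * psiT t w) ≤ C * |s - t|) :=
  ⟨fun w t => FRnorm_psiT hμ t w, exists_FRnorm_psiT_inv_mul_psiT_le hμ⟩
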